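/- arXiv:1607.05850 — 3 statements merged into one kernel-verified Lean document; each statement's English description precedes it below -/
import Mathlib

section
/- Let Γ = ((V,E),(V₁,V₂)) be a game graph, Ω a prefix-independent objective, p ∈ {1,2} a player and op the opposing player. Let X be a subset of the winning set W_p(Γ,Ω) of player p and let A = Attr_p(Γ,X) be its player-p attractor. Then W_p(Γ,Ω) = A ∪ W_p(Γ[V∖A],Ω) and W_op(Γ,Ω) = W_op(Γ[V∖A],Ω). -/
open Classical

universe u

/-- A game graph: a directed graph `E` on vertex set `V` together with the set
`P1` of player-1 vertices; player-2 vertices are the complement of `P1`. -/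
structure GameGraph (V : Type u) where
  E : V → V → Prop
  P1 : Set V

/-- The two players. -/
inductive Player : Type where
  | one : Player
  | two : Player

/-- The opponent of a player. -/
def Player.opp : Player → Player
  | .one => .two
  | .two => .one

/-- Select the first argument for player 1 and the second for player 2. -/
def Player.sel {α : Sort*} : Player → α → α → α
  | .one, a, _ => a
  | .two, _, b => b

variable {V : Type u}

/-- The vertices belonging to a player. -/
def GameGraph.verts (Γ : GameGraph V) : Player → Set V
  | .one => Γ.P1
  | .two => Γ.P1ᶜ

/-- Every vertex has at least one outgoing edge. -/
def GameGraph.NoDead (Γ : GameGraph V) : Prop := ∀ v, ∃ w, Γ.E v w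

/-- A (general, history-dependent) strategy: given the history of the play so far
(the vertices visited strictly before the current one) and the current vertex,
choose a next vertex. -/
abbrev Strat (V : Type u) : Type u := List V → V → V

/-- A strategy is memoryless if it depends only on the current vertex. -/
def Memoryless (σ : Strat V) : Prop := ∀ h h' v, σ h v = σ h' v

/-- A strategy is valid for player `p` if at every vertex of player `p` it
chooses a successor of that vertex. -/
def GameGraph.ValidFor (Γ : GameGraph V) (p : Player) (σ : Strat V) : Prop :=
  ∀ hist v, v ∈ Γ.verts p → Γ.E v (σ hist v)

/-- One step of the play: the player-1 strategy moves at `P1`-vertices, the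
player-2 strategy elsewhere. -/
noncomputable def GameGraph.step (Γ : GameGraph V) (σ π : Strat V)
    (hist : List V) (v : V) : V :=
  if v ∈ Γ.P1 then σ hist v else π hist v

/-- The play determined by a start vertex `v`, a player-1 strategy `σ` and a
player-2 strategy `π`, together with its history. -/
noncomputable def GameGraph.playAux (Γ : GameGraph V) (σ π : Strat V) (v : V) :
    ℕ → List V × V
  | 0 => ([], v)
  | n + 1 =>
      let q := Γ.playAux σ π v n
      (q.1 ++ [q.2], Γ.step σ π q.1 q.2)

/-- The play determined by a start vertex `v`, a player-1 strategy `σ` and a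
player-2 strategy `π`. -/
noncomputable def GameGraph.play (Γ : GameGraph V) (σ π : Strat V) (v : V)
    (n : ℕ) : V :=
  (Γ.playAux σ π v n).2

/-- The play from `v` where player `p` uses strategy `σ` and the opponent uses
strategy `τ`. -/
noncomputable def GameGraph.winPlay (Γ : GameGraph V) (p : Player)
    (σ τ : Strat V) (v : V) : ℕ → V :=
  Γ.play (p.sel σ τ) (p.sel τ σ) v

/-- Player `p` wins from `v` for objective `Ω`: player 1 wants the resulting
play to lie in `Ω`, player 2 wants it to lie outside `Ω`. -/
def GameGraph.Wins (Γ : GameGraph V) (p : Player) (Ω : Set (ℕ → V)) (v : V) :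
    Prop :=
  ∃ σ, Γ.ValidFor p σ ∧ ∀ τ, Γ.ValidFor p.opp τ →
    p.sel (Γ.winPlay p σ τ v ∈ Ω) (Γ.winPlay p σ τ v ∉ Ω)

/-- A player-`p` dominion for objective `Ω`: a nonempty set from each of whose
vertices player `p` has a winning strategy that moreover keeps the play inside
the set. -/
def GameGraph.Dominion (Γ : GameGraph V) (p : Player) (Ω : Set (ℕ → V))
    (D : Set V) : Prop :=
  D.Nonempty ∧ ∀ v ∈ D, ∃ σ, Γ.ValidFor p σ ∧ ∀ τ, Γ.ValidFor p.opp τ →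
    (p.sel (Γ.winPlay p σ τ v ∈ Ω) (Γ.winPlay p σ τ v ∉ Ω)) ∧
    ∀ n, Γ.winPlay p σ τ v n ∈ D

/-- The player-`p` attractor of `U`: the least set containing `U`, every
player-`p` vertex with some successor in it, and every opponent vertex all of
whose successors are in it. -/
inductive GameGraph.Attr (Γ : GameGraph V) (p : Player) (U : Set V) : V → Prop
  | base {v} : v ∈ U → GameGraph.Attr Γ p U v
  | own {v w} : v ∈ Γ.verts p → Γ.E v w → GameGraph.Attr Γ p U w →
      GameGraph.Attr Γ p U v
  | opp {v} : v ∈ Γ.verts p.opp → (∀ w, Γ.E v w → GameGraph.Attr Γ p U w) →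
      GameGraph.Attr Γ p U v

/-- The player-`p` attractor, as a set. -/
def GameGraph.attr (Γ : GameGraph V) (p : Player) (U : Set V) : Set V :=
  {v | Γ.Attr p U v}

/-- The iterative construction `R_j` of the player-`p` attractor. -/
def GameGraph.attrIter (Γ : GameGraph V) (p : Player) (U : Set V) : ℕ → Set V
  | 0 => U
  | n + 1 =>
      Γ.attrIter p U n
        ∪ {v | v ∈ Γ.verts p ∧ ∃ w, Γ.E v w ∧ w ∈ Γ.attrIter p U n}
        ∪ {v | v ∈ Γ.verts p.opp ∧ ∀ w, Γ.E v w → w ∈ Γ.attrIter p U n}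

/-- The `p`-rank of `v` with respect to `U`: the least `j` with `v ∈ R_j`, and
`∞` if there is no such `j`. -/
noncomputable def GameGraph.rank (Γ : GameGraph V) (p : Player) (U : Set V)
    (v : V) : ℕ∞ :=
  ⨅ n ∈ {n : ℕ | v ∈ Γ.attrIter p U n}, (n : ℕ∞)

/-- A set `U` is `p`-closed: every player-`p` vertex of `U` has all its
successors in `U`, and every opponent vertex of `U` has some successor in `U`. -/
def GameGraph.PClosed (Γ : GameGraph V) (p : Player) (U : Set V) : Prop :=
  ∀ v ∈ U, (v ∈ Γ.verts p → ∀ w, Γ.E v w → w ∈ U) ∧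
    (v ∈ Γ.verts p.opp → ∃ w, Γ.E v w ∧ w ∈ U)

/-- The induced game graph on a subset `U` of the vertices. -/
def GameGraph.sub (Γ : GameGraph V) (U : Set V) : GameGraph U where
  E a b := Γ.E (a : V) (b : V)
  P1 := {a : U | (a : V) ∈ Γ.P1}

/-- The game graph with the roles of the two players exchanged. -/
def GameGraph.swap (Γ : GameGraph V) : GameGraph V where
  E := Γ.E
  P1 := Γ.P1ᶜ

/-- The set of vertices occurring infinitely often in a play. -/
def InfOcc (ω : ℕ → V) : Set V := {v | ∀ n, ∃ m, n ≤ m ∧ ω m = v}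

/-- An objective is prefix-independent if membership of a play depends only on
the set of vertices visited infinitely often. -/
def PrefixIndep (Ω : Set (ℕ → V)) : Prop :=
  ∀ ω ω', InfOcc ω = InfOcc ω' → (ω ∈ Ω ↔ ω' ∈ Ω)

/-- The Büchi objective with target set `T`. -/
def BuchiObj (T : Set V) : Set (ℕ → V) := {ω | (InfOcc ω ∩ T).Nonempty}

/-- The generalized Büchi objective with target sets `T i`. -/
def GenBuchiObj {ι : Sort*} (T : ι → Set V) : Set (ℕ → V) :=
  {ω | ∀ i, (InfOcc ω ∩ T i).Nonempty}

/-- The disjunctive co-Büchi objective with target sets `T i`. -/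
def DisjCoBuchiObj {ι : Sort*} (T : ι → Set V) : Set (ℕ → V) :=
  {ω | ∃ i, InfOcc ω ∩ T i = ∅}

/-- The GR(1) objective with assumption sets `L t` and guarantee sets `U ℓ`. -/
def GR1Obj {ι₁ ι₂ : Sort*} (L : ι₁ → Set V) (U : ι₂ → Set V) : Set (ℕ → V) :=
  {ω | (∀ t, (InfOcc ω ∩ L t).Nonempty) → ∀ ℓ, (InfOcc ω ∩ U ℓ).Nonempty}

/-- An objective on the full vertex set, restricted to plays of the induced
game graph on `U`. -/
def subObj (U : Set V) (Ω : Set (ℕ → V)) : Set (ℕ → ↥U) :=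
  {ω | (fun n => (ω n : V)) ∈ Ω}

/-- The out-degree of a vertex. -/
noncomputable def GameGraph.outDeg (Γ : GameGraph V) (v : V) : ℕ :=
  {w | Γ.E v w}.ncard

/-- A hierarchical graph decomposition of a game graph `Γ`: for every vertex
`v`, `idx v` enumerates the incoming edges of `v` (i.e., their sources) by the
positions `0, …, indeg(v) − 1`, listing edges from player-2 vertices first. -/
structure HierDecomp (Γ : GameGraph V) where
  idx : V → V → ℕ
  idx_inj : ∀ v u u', Γ.E u v → Γ.E u' v → idx v u = idx v u' → u = u'
  idx_lt : ∀ v u, Γ.E u v → idx v u < {u' | Γ.E u' v}.ncard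
  p2_first : ∀ v u u', Γ.E u v → Γ.E u' v → u ∉ Γ.P1 → u' ∈ Γ.P1 →
      idx v u < idx v u'

/-- The `i`-th level `Γ_i = (G_i, (V₁,V₂))` of the hierarchical graph
decomposition: `G_i` keeps all outgoing edges of vertices of out-degree at most
`2^i`, and the first `2^i` incoming edges of every vertex. -/
def HierDecomp.graph {Γ : GameGraph V} (H : HierDecomp Γ) (i : ℕ) :
    GameGraph V where
  E u v := Γ.E u v ∧ (Γ.outDeg u ≤ 2 ^ i ∨ H.idx v u < 2 ^ i)
  P1 := Γ.P1

/-- The exception set `Z_i`: player-2 vertices with no outgoing edge in `G_i`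
together with player-1 vertices with more than `2^i` outgoing edges in `G`. -/
def HierDecomp.Z {Γ : GameGraph V} (H : HierDecomp Γ) (i : ℕ) : Set V :=
  {v | v ∉ Γ.P1 ∧ ¬ ∃ w, (H.graph i).E v w} ∪
    {v | v ∈ Γ.P1 ∧ 2 ^ i < Γ.outDeg v}

/-- Cyclic successor `ℓ ⊕ 1` on `Fin k`. -/
def finSucc {k : ℕ} (ℓ : Fin k) : Fin k :=
  ⟨(ℓ.val + 1) % k, Nat.mod_lt _ (Nat.lt_of_le_of_lt (Nat.zero_le _) ℓ.isLt)⟩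

/-- The bound `n̄ = min (h − 1) |V ∖ T|` of the progress measure. -/
noncomputable def nbar (h : ℕ) (T : Set V) : ℕ := min (h - 1) Tᶜ.ncard

/-- The value of the best successor of `v` for the player owning `v`. -/
noncomputable def GameGraph.best (Γ : GameGraph V) {k : ℕ} (T : Fin k → Set V)
    (ρ : Fin k → V → ℕ∞) (ℓ : Fin k) (v : V) : ℕ∞ :=
  let ℓ' := if v ∈ T ℓ then finSucc ℓ else ℓ
  if v ∈ Γ.P1 then ⨅ w ∈ {w | Γ.E v w}, ρ ℓ' w
  else ⨆ w ∈ {w | Γ.E v w}, ρ ℓ' w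

/-- The increment operation `incr` of the progress measure (for the pair
`(v, ℓ)`). -/
noncomputable def pmIncr (h : ℕ) {k : ℕ} (T : Fin k → Set V) (ℓ : Fin k)
    (v : V) (x : ℕ∞) : ℕ∞ :=
  if v ∈ T ℓ ∧ x ≠ ⊤ then 0
  else if x < (nbar h (T ℓ) : ℕ∞) then x + 1 else ⊤

/-- The update operator of the progress measure: update `ρ ℓ v` to
`max (ρ ℓ v) (incr (best v))`. -/
noncomputable def GameGraph.pmStep (Γ : GameGraph V) (h : ℕ) {k : ℕ}
    (T : Fin k → Set V) (ρ : Fin k → V → ℕ∞) : Fin k → V → ℕ∞ :=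
  fun ℓ v => max (ρ ℓ v) (pmIncr h T ℓ v (Γ.best T ρ ℓ v))

/-- `ρ` is the progress measure associated with `Γ`, `T` and `h`: the least
fixed point (starting from the all-zero functions, i.e., the least one) of the
update operator. -/
def GameGraph.IsProgressMeasure (Γ : GameGraph V) (h : ℕ) {k : ℕ}
    (T : Fin k → Set V) (ρ : Fin k → V → ℕ∞) : Prop :=
  Γ.pmStep h T ρ = ρ ∧ ∀ ρ', Γ.pmStep h T ρ' = ρ' → ∀ ℓ v, ρ ℓ v ≤ ρ' ℓ v

/-- Player `p` can force, from `v`, that the play stays in `D` forever and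
visits every target set `T i` infinitely often. -/
def GameGraph.ForcesStayBuchi (Γ : GameGraph V) (p : Player) (D : Set V)
    {ι : Sort*} (T : ι → Set V) (v : V) : Prop :=
  ∃ σ, Γ.ValidFor p σ ∧ ∀ τ, Γ.ValidFor p.opp τ →
    (∀ n, Γ.winPlay p σ τ v n ∈ D) ∧
    ∀ i n, ∃ m, n ≤ m ∧ Γ.winPlay p σ τ v m ∈ T i

/-!
From a vertex of `X` player `p` wins by assumption, and from the rest of `A` by forcing the play
into `X` and then forgetting the past, which does not matter because the objective is insensitive to
dropping an initial segment. So player `p` wins everywhere outside the `p`-closed set `U = V ∖ A`.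

For such a `U` strategies can be transferred between `Γ` and `Γ[U]`: the only way to leave `U` is a
move of the opponent to a vertex won by player `p`. So a strategy winning for player `p` in `Γ[U]`
wins in `Γ` once it is told to switch to a winning strategy as soon as the play leaves `U`, whereas
a winning strategy of the opponent in `Γ` stays in the opponent's winning set, and hence in `U`.
-/

/-- The initial segment `[ω 0, …, ω (n - 1)]` of a play, i.e. the history seen by a strategy that
moves at `ω n`. -/
def playPrefix (ω : ℕ → V) (n : ℕ) : List V := (List.range n).map ω

theorem length_playPrefix (ω : ℕ → V) (n : ℕ) : (playPrefix ω n).length = n := by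
  simp [playPrefix]

theorem playPrefix_succ (ω : ℕ → V) (n : ℕ) :
    playPrefix ω (n + 1) = playPrefix ω n ++ [ω n] := by
  simp [playPrefix, List.range_succ]

theorem playPrefix_succ' (ω : ℕ → V) (n : ℕ) :
    playPrefix ω (n + 1) = ω 0 :: playPrefix (fun i => ω (i + 1)) n := by
  simp [playPrefix, List.range_succ_eq_map, Function.comp_def]

theorem playPrefix_add (ω : ℕ → V) (n k : ℕ) :
    playPrefix ω (n + k) = playPrefix ω k ++ playPrefix (fun i => ω (i + k)) n := by
  simp [playPrefix, Nat.add_comm _ k, List.range_add, Function.comp_def]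

theorem map_playPrefix {W : Type*} (f : V → W) (ω : ℕ → V) (n : ℕ) :
    (playPrefix ω n).map f = playPrefix (fun i => f (ω i)) n := by
  simp [playPrefix, Function.comp_def]

theorem headD_playPrefix (ω : ℕ → V) (n : ℕ) : (playPrefix ω n).headD (ω n) = ω 0 := by
  cases n with
  | zero => rfl
  | succ n => rw [playPrefix_succ']; rfl

theorem forall_mem_playPrefix {ω : ℕ → V} {n : ℕ} {P : V → Prop} :
    (∀ u ∈ playPrefix ω n, P u) ↔ ∀ i < n, P (ω i) := by
  simp [playPrefix]

/-- The set of plays won by player `p`: the objective itself for player 1, its complement for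
player 2. -/
def Player.obj (p : Player) (Ω : Set (ℕ → V)) : Set (ℕ → V) := p.sel Ω Ωᶜ

theorem Player.mem_obj {p : Player} {Ω : Set (ℕ → V)} {ω : ℕ → V} :
    ω ∈ p.obj Ω ↔ p.sel (ω ∈ Ω) (ω ∉ Ω) := by
  cases p <;> rfl

theorem Player.mem_obj_subObj {p : Player} {U : Set V} {Ω : Set (ℕ → V)} {ω : ℕ → U} :
    ω ∈ p.obj (subObj U Ω) ↔ (fun n => (ω n : V)) ∈ p.obj Ω := by
  cases p <;> rfl

/-- An objective is shift-invariant if removing the first vertex of a play does not affect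
membership. Mean-payoff objectives, for example, have this property but are not `PrefixIndep`. -/
def ShiftInvariant (Ω : Set (ℕ → V)) : Prop :=
  ∀ ω : ℕ → V, (fun n => ω (n + 1)) ∈ Ω ↔ ω ∈ Ω

theorem infOcc_shift (ω : ℕ → V) : InfOcc (fun n => ω (n + 1)) = InfOcc ω := by
  ext v
  constructor
  · intro h n
    obtain ⟨m, hm, rfl⟩ := h n
    exact ⟨m + 1, by omega, rfl⟩
  · intro h n
    obtain ⟨m, hm, rfl⟩ := h (n + 1)
    exact ⟨m - 1, by omega, congrArg ω (by omega)⟩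

theorem PrefixIndep.shiftInvariant {Ω : Set (ℕ → V)} (hΩ : PrefixIndep Ω) : ShiftInvariant Ω :=
  fun ω => hΩ _ _ (infOcc_shift ω)

theorem ShiftInvariant.obj {Ω : Set (ℕ → V)} (hΩ : ShiftInvariant Ω) (p : Player) :
    ShiftInvariant (p.obj Ω) := by
  cases p
  · exact hΩ
  · exact fun ω => not_congr (hΩ ω)

theorem ShiftInvariant.mem_iff {Ω : Set (ℕ → V)} (hΩ : ShiftInvariant Ω) (k : ℕ) (ω : ℕ → V) :
    (fun n => ω (n + k)) ∈ Ω ↔ ω ∈ Ω := by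
  induction k generalizing ω with
  | zero => rfl
  | succ k ih => exact (ih fun n => ω (n + 1)).trans (hΩ ω)

namespace GameGraph

variable {Γ : GameGraph V} {p : Player} {Ω : Set (ℕ → V)} {σ τ : Strat V} {ω : ℕ → V}
  {U : Set V} {v : V}

theorem mem_verts_opp : v ∈ Γ.verts p.opp ↔ v ∉ Γ.verts p := by
  cases p <;> simp [verts, Player.opp]

theorem mem_verts_sub {u : U} : u ∈ (Γ.sub U).verts p ↔ (u : V) ∈ Γ.verts p := by
  cases p <;> rfl

theorem NoDead.exists_validFor (hΓ : Γ.NoDead) (p : Player) : ∃ σ, Γ.ValidFor p σ := by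
  choose next hnext using hΓ
  exact ⟨fun _ => next, fun _ u _ => hnext u⟩

/-- A play (infinite path) of `Γ` in which player `p` moves according to `σ`, the moves of the
opponent being arbitrary. -/
structure Consistent (Γ : GameGraph V) (p : Player) (σ : Strat V) (ω : ℕ → V) : Prop where
  edge : ∀ n, Γ.E (ω n) (ω (n + 1))
  move : ∀ n, ω n ∈ Γ.verts p → ω (n + 1) = σ (playPrefix ω n) (ω n)

theorem playAux_fst (Γ : GameGraph V) (σ τ : Strat V) (v : V) (n : ℕ) :
    (Γ.playAux σ τ v n).1 = playPrefix (Γ.play σ τ v) n := by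
  induction n with
  | zero => rfl
  | succ n ih => rw [playPrefix_succ, ← ih]; rfl

theorem winPlay_succ (Γ : GameGraph V) (p : Player) (σ τ : Strat V) (v : V) (n : ℕ) :
    Γ.winPlay p σ τ v (n + 1) =
      if Γ.winPlay p σ τ v n ∈ Γ.verts p
      then σ (playPrefix (Γ.winPlay p σ τ v) n) (Γ.winPlay p σ τ v n)
      else τ (playPrefix (Γ.winPlay p σ τ v) n) (Γ.winPlay p σ τ v n) := by
  simp only [winPlay, ← playAux_fst]
  cases p
  · rfl
  · simp only [verts, Set.mem_compl_iff, ite_not]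
    rfl

theorem consistent_winPlay (hσ : Γ.ValidFor p σ) (hτ : Γ.ValidFor p.opp τ) (v : V) :
    Γ.Consistent p σ (Γ.winPlay p σ τ v) where
  edge n := by
    rw [winPlay_succ]
    split_ifs with hn
    exacts [hσ _ _ hn, hτ _ _ (mem_verts_opp.2 hn)]
  move n hn := by rw [winPlay_succ, if_pos hn]

theorem Consistent.winPlay_eq (hω : Γ.Consistent p σ ω)
    (hτ : ∀ n, τ (playPrefix ω n) (ω n) = ω (n + 1)) : Γ.winPlay p σ τ (ω 0) = ω := by
  have agree (n : ℕ) : playPrefix (Γ.winPlay p σ τ (ω 0)) n = playPrefix ω n ∧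
      Γ.winPlay p σ τ (ω 0) n = ω n := by
    induction n with
    | zero => exact ⟨rfl, rfl⟩
    | succ n ih =>
      refine ⟨by rw [playPrefix_succ, playPrefix_succ, ih.1, ih.2], ?_⟩
      rw [winPlay_succ, ih.1, ih.2]
      split_ifs with hn
      exacts [(hω.move n hn).symm, hτ n]
  exact funext fun n => (agree n).2

theorem NoDead.exists_validFor_forall_eq (hΓ : Γ.NoDead) (p : Player)
    (hω : ∀ n, Γ.E (ω n) (ω (n + 1))) :
    ∃ τ, Γ.ValidFor p τ ∧ ∀ n, τ (playPrefix ω n) (ω n) = ω (n + 1) := by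
  choose next hnext using hΓ
  refine ⟨fun h u => if u = ω h.length then ω (h.length + 1) else next u, fun h u _ => ?_,
    fun n => by simp [length_playPrefix]⟩
  dsimp only
  split_ifs with hu
  exacts [hu ▸ hω _, hnext u]

/-- `σ` is a winning strategy of player `p` from `v`, expressed through the plays consistent with
`σ` instead of through strategies of the opponent. -/
structure WinsWith (Γ : GameGraph V) (p : Player) (Ω : Set (ℕ → V)) (σ : Strat V) (v : V) :
    Prop where
  validFor : Γ.ValidFor p σ
  mem_obj : ∀ ω, ω 0 = v → Γ.Consistent p σ ω → ω ∈ p.obj Ω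

/-- The vertices from which player `p` has a winning strategy in the sense of `WinsWith`. In the
absence of dead ends this is the winning set given by `Wins`; see `wins_iff_mem_winningRegion`. -/
def winningRegion (Γ : GameGraph V) (p : Player) (Ω : Set (ℕ → V)) : Set V :=
  {v | ∃ σ, Γ.WinsWith p Ω σ v}

theorem wins_iff_mem_winningRegion (hΓ : Γ.NoDead) :
    Γ.Wins p Ω v ↔ v ∈ Γ.winningRegion p Ω := by
  constructor
  · rintro ⟨σ, hσ, hwin⟩
    refine ⟨σ, hσ, ?_⟩
    rintro ω rfl hω
    obtain ⟨τ, hτ, hτω⟩ := hΓ.exists_validFor_forall_eq p.opp hω.edge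
    rw [← hω.winPlay_eq hτω]
    exact Player.mem_obj.2 (hwin τ hτ)
  · rintro ⟨σ, hσ⟩
    exact ⟨σ, hσ.validFor, fun τ hτ =>
      Player.mem_obj.1 (hσ.mem_obj _ rfl (consistent_winPlay hσ.validFor hτ v))⟩

theorem Wins.not_wins_opp (h : Γ.Wins p Ω v) : ¬ Γ.Wins p.opp Ω v := by
  rintro ⟨τ, hτ, hτwin⟩
  obtain ⟨σ, hσ, hσwin⟩ := h
  cases p
  · exact hτwin σ hσ (hσwin τ hτ)
  · exact hσwin τ hτ (hτwin σ hσ)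

end GameGraph

/-- What remains of `σ` after the history `h`. -/
def Strat.after (σ : Strat V) (h : List V) : Strat V := fun l => σ (h ++ l)

theorem Strat.after_apply_nil (σ : Strat V) (h : List V) : σ.after h [] = σ h := by
  simp [after]

theorem Strat.after_append (σ : Strat V) (h₁ h₂ : List V) :
    σ.after (h₁ ++ h₂) = (σ.after h₁).after h₂ := by
  funext l
  simp [after, List.append_assoc]

/-- Restriction of a strategy to the vertices in `U`: moves that would leave `U` are replaced by
those of `τ`. -/
noncomputable def Strat.restrict {U : Set V} (σ : Strat V) (τ : Strat U) : Strat U :=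
  fun h u => if hu : σ (h.map (↑)) u ∈ U then ⟨_, hu⟩ else τ h u

theorem Strat.coe_restrict {U : Set V} {σ : Strat V} {τ : Strat U} {h : List U} {u : U}
    (hu : σ (h.map (↑)) u ∈ U) : (σ.restrict τ h u : V) = σ (h.map (↑)) u := by
  rw [restrict, dif_pos hu]

/-- Extension of a strategy on `U` by `τ` outside `U`. Only histories inside `U` are meaningful;
the inverse of the inclusion sends all other vertices to an arbitrary element of `U`. -/
noncomputable def Strat.extend {U : Set V} [Nonempty U] (σ : Strat U) (τ : Strat V) : Strat V :=
  fun h u =>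
    if u ∈ U then σ (h.map (Function.invFun (↑))) (Function.invFun (↑) u) else τ h u

theorem Strat.extend_map_coe {U : Set V} [Nonempty U] (σ : Strat U) (τ : Strat V) (h : List U)
    (u : U) : σ.extend τ (h.map (↑)) u = σ h u := by
  have invFun_coe : Function.LeftInverse (Function.invFun ((↑) : U → V)) (↑) :=
    Function.leftInverse_invFun Subtype.val_injective
  rw [extend, if_pos u.2, List.map_map, invFun_coe.comp_eq_id, List.map_id, invFun_coe]

theorem Strat.extend_mem {U : Set V} [Nonempty U] (σ : Strat U) (τ : Strat V) (h : List V) {u : V}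
    (hu : u ∈ U) : σ.extend τ h u ∈ U := by
  rw [extend, if_pos hu]
  exact Subtype.property _

/-- Follow `σ` until the play visits `S`, and from the first visited vertex `s ∈ S` on follow `ρ s`,
forgetting what happened before. The vertex `s` is the head of what remains of the history after
its initial vertices outside `S` are dropped, or the current vertex if nothing remains. -/
noncomputable def Strat.switch (S : Set V) (ρ : V → Strat V) (σ : Strat V) : Strat V :=
  fun h u =>
    let l := h.dropWhile (· ∉ S)
    if l.headD u ∈ S then ρ (l.headD u) l u else σ h u

section Switch

variable {S : Set V} {ρ : V → Strat V} {σ : Strat V} {ω : ℕ → V}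

theorem Strat.switch_of_forall_notMem {n : ℕ} (hω : ∀ i ≤ n, ω i ∉ S) :
    σ.switch S ρ (playPrefix ω n) (ω n) = σ (playPrefix ω n) (ω n) := by
  have drop_eq_nil : (playPrefix ω n).dropWhile (· ∉ S) = [] := by
    rw [List.dropWhile_eq_nil_iff]
    simpa using forall_mem_playPrefix (P := (· ∉ S)).2 fun i hi => hω i hi.le
  simp only [switch, drop_eq_nil, List.headD_nil, if_neg (hω n le_rfl)]

theorem dropWhile_playPrefix_add {k : ℕ} (hlt : ∀ i < k, ω i ∉ S) (hk : ω k ∈ S) (n : ℕ) :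
    (playPrefix ω (n + k)).dropWhile (· ∉ S) = playPrefix (fun i => ω (i + k)) n := by
  rw [playPrefix_add, List.dropWhile_append_of_pos]
  · cases n with
    | zero => rfl
    | succ n => rw [playPrefix_succ', List.dropWhile_cons_of_neg (by simpa using hk)]
  · simpa using forall_mem_playPrefix (P := (· ∉ S)).2 hlt

theorem Strat.switch_of_mem {k : ℕ} (hlt : ∀ i < k, ω i ∉ S) (hk : ω k ∈ S) (n : ℕ) :
    σ.switch S ρ (playPrefix ω (n + k)) (ω (n + k)) =
      ρ (ω k) (playPrefix (fun i => ω (i + k)) n) (ω (n + k)) := by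
  have head_eq : (playPrefix (fun i => ω (i + k)) n).headD (ω (n + k)) = ω k := by
    simpa using headD_playPrefix (fun i => ω (i + k)) n
  simp only [switch, dropWhile_playPrefix_add hlt hk, head_eq, if_pos hk]

end Switch

namespace GameGraph

variable {Γ : GameGraph V} {p : Player} {Ω : Set (ℕ → V)} {σ τ : Strat V} {ω : ℕ → V}
  {U X : Set V} {v w : V}

theorem ValidFor.switch {S : Set V} {ρ : V → Strat V} (hσ : Γ.ValidFor p σ)
    (hρ : ∀ s ∈ S, Γ.ValidFor p (ρ s)) : Γ.ValidFor p (σ.switch S ρ) := by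
  intro h u hu
  dsimp only [Strat.switch]
  split_ifs with hs
  exacts [hρ _ hs _ u hu, hσ h u hu]

theorem Consistent.of_switch_of_forall_notMem {S : Set V} {ρ : V → Strat V}
    (hω : Γ.Consistent p (σ.switch S ρ) ω) (hS : ∀ n, ω n ∉ S) : Γ.Consistent p σ ω where
  edge := hω.edge
  move n hn := by rw [hω.move n hn, Strat.switch_of_forall_notMem fun i _ => hS i]

theorem Consistent.of_switch_of_mem {S : Set V} {ρ : V → Strat V} {k : ℕ}
    (hω : Γ.Consistent p (σ.switch S ρ) ω) (hlt : ∀ i < k, ω i ∉ S) (hk : ω k ∈ S) :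
    Γ.Consistent p (ρ (ω k)) fun n => ω (n + k) where
  edge n := by simpa only [Nat.add_right_comm] using hω.edge (n + k)
  move n hn := by
    rw [Nat.add_right_comm, hω.move (n + k) hn, Strat.switch_of_mem hlt hk]

theorem mem_winningRegion_of_forall_mem_obj_or_reaches (hΩ : ShiftInvariant Ω)
    (hσ : Γ.ValidFor p σ)
    (hwin : ∀ ω, ω 0 = v → Γ.Consistent p σ ω →
      ω ∈ p.obj Ω ∨ ∃ n, ω n ∈ Γ.winningRegion p Ω) :
    v ∈ Γ.winningRegion p Ω := by
  have winning_strategy (s : V) :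
      ∃ ρ, s ∈ Γ.winningRegion p Ω → Γ.WinsWith p Ω ρ s := by
    by_cases hs : s ∈ Γ.winningRegion p Ω
    · exact hs.imp fun _ hρ _ => hρ
    · exact ⟨σ, fun h => absurd h hs⟩
  choose ρ hρ using winning_strategy
  refine ⟨σ.switch (Γ.winningRegion p Ω) ρ, hσ.switch fun s hs => (hρ s hs).validFor, ?_⟩
  intro ω hv hω
  by_cases hreach : ∃ n, ω n ∈ Γ.winningRegion p Ω
  · obtain ⟨k, hk, hlt⟩ : ∃ k, ω k ∈ Γ.winningRegion p Ω ∧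
        ∀ i < k, ω i ∉ Γ.winningRegion p Ω :=
      ⟨Nat.find hreach, Nat.find_spec hreach, fun _ => Nat.find_min hreach⟩
    rw [← (hΩ.obj p).mem_iff k]
    exact (hρ _ hk).mem_obj _ (by simp) (hω.of_switch_of_mem hlt hk)
  · exact (hwin ω hv (hω.of_switch_of_forall_notMem (not_exists.1 hreach))).resolve_right hreach

theorem mem_winningRegion_of_edge (hΩ : ShiftInvariant Ω) (hv : v ∈ Γ.verts p) (hvw : Γ.E v w)
    (hw : w ∈ Γ.winningRegion p Ω) : v ∈ Γ.winningRegion p Ω := by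
  obtain ⟨σ, hσ⟩ := id hw
  refine mem_winningRegion_of_forall_mem_obj_or_reaches hΩ
    (σ := fun h u => if u = v then w else σ h u) ?_ ?_
  · intro h u hu
    dsimp only
    split_ifs with huv
    exacts [huv ▸ hvw, hσ.validFor h u hu]
  · rintro ω rfl hω
    have first_move : ω 1 = w := by simpa using hω.move 0 hv
    exact Or.inr ⟨1, first_move ▸ hw⟩

theorem mem_winningRegion_of_forall_edge (hΩ : ShiftInvariant Ω) (hΓ : Γ.NoDead)
    (hv : ∀ w, Γ.E v w → w ∈ Γ.winningRegion p Ω) : v ∈ Γ.winningRegion p Ω := by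
  obtain ⟨σ, hσ⟩ := hΓ.exists_validFor p
  refine mem_winningRegion_of_forall_mem_obj_or_reaches hΩ hσ ?_
  rintro ω rfl hω
  exact Or.inr ⟨1, hv _ (hω.edge 0)⟩

theorem attr_subset_winningRegion (hΩ : ShiftInvariant Ω) (hΓ : Γ.NoDead)
    (hX : X ⊆ Γ.winningRegion p Ω) : Γ.attr p X ⊆ Γ.winningRegion p Ω := by
  intro v hv
  induction hv with
  | base hv => exact hX hv
  | own hv hvw _ ih => exact mem_winningRegion_of_edge hΩ hv hvw ih
  | opp _ _ ih => exact mem_winningRegion_of_forall_edge hΩ hΓ ih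

theorem pClosed_compl_attr (Γ : GameGraph V) (p : Player) (X : Set V) :
    Γ.PClosed p (Γ.attr p X)ᶜ := by
  refine fun v hv => ⟨fun hp w hvw hw => hv (.own hp hvw hw), fun hp => ?_⟩
  by_contra! h
  exact hv (.opp hp fun w hvw => not_not.1 (h w hvw))

theorem PClosed.noDead_sub (hU : Γ.PClosed p U) (hΓ : Γ.NoDead) : (Γ.sub U).NoDead := by
  rintro ⟨u, hu⟩
  by_cases hp : u ∈ Γ.verts p
  · obtain ⟨w, huw⟩ := hΓ u
    exact ⟨⟨w, (hU u hu).1 hp w huw⟩, huw⟩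
  · obtain ⟨w, huw, hw⟩ := (hU u hu).2 (mem_verts_opp.2 hp)
    exact ⟨⟨w, hw⟩, huw⟩

theorem Consistent.cons (hω : Γ.Consistent p (σ.after [v]) ω) (hE : Γ.E v (ω 0))
    (hmove : v ∈ Γ.verts p → ω 0 = σ [] v) :
    Γ.Consistent p σ fun n => Nat.casesOn n v ω where
  edge
    | 0 => hE
    | n + 1 => hω.edge n
  move
    | 0 => hmove
    | n + 1 => fun hn => by rw [playPrefix_succ']; exact hω.move n hn

theorem WinsWith.after_singleton (hΩ : ShiftInvariant Ω) (hσ : Γ.WinsWith p Ω σ v)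
    (hvw : Γ.E v w) (hmove : v ∈ Γ.verts p → w = σ [] v) :
    Γ.WinsWith p Ω (σ.after [v]) w where
  validFor _ u hu := hσ.validFor _ u hu
  mem_obj := by
    rintro ω rfl hω
    exact (hΩ.obj p _).2 (hσ.mem_obj _ rfl (hω.cons hvw hmove))

theorem WinsWith.after_playPrefix (hΩ : ShiftInvariant Ω) (hσ : Γ.WinsWith p Ω σ (ω 0)) {n : ℕ}
    (hedge : ∀ i < n, Γ.E (ω i) (ω (i + 1)))
    (hmove : ∀ i < n, ω i ∈ Γ.verts p → ω (i + 1) = σ (playPrefix ω i) (ω i)) :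
    Γ.WinsWith p Ω (σ.after (playPrefix ω n)) (ω n) := by
  induction n with
  | zero => exact hσ
  | succ n ih =>
    have hn := ih (fun i hi => hedge i (by omega)) fun i hi => hmove i (by omega)
    rw [playPrefix_succ, Strat.after_append]
    exact hn.after_singleton hΩ (hedge n n.lt_succ_self) fun hp => by
      rw [Strat.after_apply_nil, hmove n n.lt_succ_self hp]

theorem WinsWith.move_mem_winningRegion (hΩ : ShiftInvariant Ω) (hσ : Γ.WinsWith p Ω σ (ω 0))
    {n : ℕ} (hedge : ∀ i < n, Γ.E (ω i) (ω (i + 1)))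
    (hmove : ∀ i < n, ω i ∈ Γ.verts p → ω (i + 1) = σ (playPrefix ω i) (ω i))
    (hn : ω n ∈ Γ.verts p) : σ (playPrefix ω n) (ω n) ∈ Γ.winningRegion p Ω :=
  ⟨_, (hσ.after_playPrefix hΩ hedge hmove).after_singleton hΩ (hσ.validFor _ _ hn) fun _ =>
    (congrFun (σ.after_apply_nil _) _).symm⟩

theorem ValidFor.restrict {τ : Strat U} (hσ : Γ.ValidFor p σ) (hτ : (Γ.sub U).ValidFor p τ) :
    (Γ.sub U).ValidFor p (σ.restrict τ) := by
  intro h u hu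
  unfold Strat.restrict
  split_ifs
  exacts [hσ _ _ (mem_verts_sub.1 hu), hτ h u hu]

theorem ValidFor.extend [Nonempty U] {σ : Strat U} (hσ : (Γ.sub U).ValidFor p σ)
    (hτ : Γ.ValidFor p τ) : Γ.ValidFor p (σ.extend τ) := by
  intro h u hu
  unfold Strat.extend
  split_ifs with huU
  · lift u to U using huU
    rw [Function.leftInverse_invFun Subtype.val_injective u]
    exact hσ _ u (mem_verts_sub.2 hu)
  · exact hτ h u hu

theorem Consistent.of_restrict (hΩ : ShiftInvariant Ω) {τ : Strat U} {ω : ℕ → U}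
    (hU : ∀ u ∈ U, u ∈ Γ.verts p → ∀ w ∈ Γ.winningRegion p Ω, Γ.E u w → w ∈ U)
    (hσ : Γ.WinsWith p Ω σ (ω 0)) (hω : (Γ.sub U).Consistent p (σ.restrict τ) ω) :
    Γ.Consistent p σ fun n => (ω n : V) where
  edge := hω.edge
  move n hn := by
    induction n using Nat.strong_induction_on with
    | _ n ih =>
      have move_mem_U : σ ((playPrefix ω n).map (↑)) (ω n) ∈ U := by
        rw [map_playPrefix]
        exact hU _ (ω n).2 hn _
          (hσ.move_mem_winningRegion (ω := fun n => (ω n : V)) hΩ (fun i _ => hω.edge i) ih hn)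
          (hσ.validFor _ _ hn)
      rw [hω.move n (mem_verts_sub.2 hn), Strat.coe_restrict move_mem_U, map_playPrefix]

theorem Consistent.of_extend [Nonempty U] {σ : Strat U} {ω : ℕ → U}
    (hω : Γ.Consistent p (σ.extend τ) fun n => (ω n : V)) : (Γ.sub U).Consistent p σ ω where
  edge := hω.edge
  move n hn := Subtype.ext <| by
    rw [hω.move n (mem_verts_sub.1 hn), ← map_playPrefix, Strat.extend_map_coe]

theorem mem_winningRegion_sub (hΩ : ShiftInvariant Ω) (hsub : (Γ.sub U).NoDead)
    (hU : ∀ u ∈ U, u ∈ Γ.verts p → ∀ w ∈ Γ.winningRegion p Ω, Γ.E u w → w ∈ U)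
    {v : U} (hv : (v : V) ∈ Γ.winningRegion p Ω) :
    v ∈ (Γ.sub U).winningRegion p (subObj U Ω) := by
  obtain ⟨σ, hσ⟩ := hv
  obtain ⟨τ, hτ⟩ := hsub.exists_validFor p
  refine ⟨σ.restrict τ, hσ.validFor.restrict hτ, ?_⟩
  rintro ω rfl hω
  exact Player.mem_obj_subObj.2 (hσ.mem_obj _ rfl (hω.of_restrict hΩ hU hσ))

theorem mem_winningRegion_of_sub (hΩ : ShiftInvariant Ω) (hΓ : Γ.NoDead)
    (hU : ∀ u ∈ U, u ∉ Γ.verts p → ∀ w, Γ.E u w → w ∈ U ∨ w ∈ Γ.winningRegion p Ω)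
    {v : U} (hv : v ∈ (Γ.sub U).winningRegion p (subObj U Ω)) :
    (v : V) ∈ Γ.winningRegion p Ω := by
  have : Nonempty U := ⟨v⟩
  obtain ⟨σ, hσ⟩ := hv
  obtain ⟨τ, hτ⟩ := hΓ.exists_validFor p
  refine mem_winningRegion_of_forall_mem_obj_or_reaches hΩ (hσ.validFor.extend hτ) ?_
  intro ω hv hω
  by_cases hreach : ∃ n, ω n ∈ Γ.winningRegion p Ω
  · exact Or.inr hreach
  have stays (n : ℕ) : ω n ∈ U := by
    induction n with
    | zero => exact hv ▸ v.2
    | succ n ih =>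
      by_cases hn : ω n ∈ Γ.verts p
      · exact hω.move n hn ▸ σ.extend_mem τ _ ih
      · exact (hU _ ih hn _ (hω.edge n)).resolve_right fun h => hreach ⟨n + 1, h⟩
  lift ω to ℕ → U using stays
  exact Or.inl (Player.mem_obj_subObj.1 (hσ.mem_obj ω (Subtype.ext hv) hω.of_extend))

theorem PClosed.wins_sub_iff (hU : Γ.PClosed p U) (hΓ : Γ.NoDead) (hΩ : ShiftInvariant Ω)
    (hcompl : ∀ v ∉ U, Γ.Wins p Ω v) (v : U) :
    (Γ.sub U).Wins p (subObj U Ω) v ↔ Γ.Wins p Ω v := by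
  have hsub := hU.noDead_sub hΓ
  simp only [wins_iff_mem_winningRegion hΓ, wins_iff_mem_winningRegion hsub] at hcompl ⊢
  exact ⟨mem_winningRegion_of_sub hΩ hΓ fun u _ _ w _ => or_iff_not_imp_left.2 (hcompl w),
    mem_winningRegion_sub hΩ hsub fun u hu hp w _ huw => (hU u hu).1 hp w huw⟩

theorem PClosed.wins_opp_sub_iff (hU : Γ.PClosed p U) (hΓ : Γ.NoDead) (hΩ : ShiftInvariant Ω)
    (hcompl : ∀ v ∉ U, Γ.Wins p Ω v) (v : U) :
    (Γ.sub U).Wins p.opp (subObj U Ω) v ↔ Γ.Wins p.opp Ω v := by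
  have hsub := hU.noDead_sub hΓ
  have hopp (w : V) (hw : w ∈ Γ.winningRegion p.opp Ω) : w ∈ U :=
    by_contra fun hwU => (hcompl w hwU).not_wins_opp ((wins_iff_mem_winningRegion hΓ).2 hw)
  rw [wins_iff_mem_winningRegion hΓ, wins_iff_mem_winningRegion hsub]
  refine ⟨mem_winningRegion_of_sub hΩ hΓ fun u hu hp w huw => ?_,
    mem_winningRegion_sub hΩ hsub fun _ _ _ w hw _ => hopp w hw⟩
  rw [mem_verts_opp, not_not] at hp
  exact Or.inl ((hU u hu).1 hp w huw)

end GameGraph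

theorem winning_set_attractor_decomposition_general (Γ : GameGraph V) (hΓ : Γ.NoDead)
    (Ω : Set (ℕ → V)) (hΩ : ShiftInvariant Ω) (p : Player) (X : Set V)
    (hX : ∀ v ∈ X, Γ.Wins p Ω v) :
    (∀ v, Γ.Wins p Ω v ↔
        (v ∈ Γ.attr p X ∨ ∃ hv : v ∈ (Γ.attr p X)ᶜ,
          (Γ.sub (Γ.attr p X)ᶜ).Wins p (subObj (Γ.attr p X)ᶜ Ω) ⟨v, hv⟩)) ∧
    (∀ v, Γ.Wins p.opp Ω v ↔
        ∃ hv : v ∈ (Γ.attr p X)ᶜ,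
          (Γ.sub (Γ.attr p X)ᶜ).Wins p.opp (subObj (Γ.attr p X)ᶜ Ω) ⟨v, hv⟩) := by
  have hA (v : V) (hv : v ∈ Γ.attr p X) : Γ.Wins p Ω v := by
    simp only [GameGraph.wins_iff_mem_winningRegion hΓ] at hX ⊢
    exact GameGraph.attr_subset_winningRegion hΩ hΓ hX hv
  have hU := Γ.pClosed_compl_attr p X
  have hcompl (v : V) (hv : v ∉ (Γ.attr p X)ᶜ) : Γ.Wins p Ω v := hA v (not_not.1 hv)
  simp only [hU.wins_sub_iff hΓ hΩ hcompl, hU.wins_opp_sub_iff hΓ hΩ hcompl, exists_prop]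
  refine ⟨fun v => ⟨fun h => ?_, ?_⟩, fun v => ⟨fun h => ⟨fun hv => ?_, h⟩, And.right⟩⟩
  · exact (Classical.em (v ∈ Γ.attr p X)).imp_right fun hv => ⟨hv, h⟩
  · rintro (hv | ⟨-, h⟩)
    exacts [hA v hv, h]
  · exact (hA v hv).not_wins_opp h

/-- If `X` is contained in the winning set of player `p` and
`A = Attr_p(Γ,X)`, then `W_p(Γ) = A ∪ W_p(Γ[V∖A])` and
`W_op(Γ) = W_op(Γ[V∖A])`. -/
theorem winning_set_attractor_decomposition {V : Type u} [Finite V]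
    (Γ : GameGraph V) (hΓ : Γ.NoDead) (Ω : Set (ℕ → V))
    (hΩ : PrefixIndep Ω) (p : Player) (X : Set V)
    (hX : ∀ v ∈ X, Γ.Wins p Ω v) :
    (∀ v, Γ.Wins p Ω v ↔
        (v ∈ Γ.attr p X ∨ ∃ hv : v ∈ (Γ.attr p X)ᶜ,
          (Γ.sub (Γ.attr p X)ᶜ).Wins p (subObj (Γ.attr p X)ᶜ Ω) ⟨v, hv⟩)) ∧
    (∀ v, Γ.Wins p.opp Ω v ↔
        ∃ hv : v ∈ (Γ.attr p X)ᶜ,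
          (Γ.sub (Γ.attr p X)ᶜ).Wins p.opp (subObj (Γ.attr p X)ᶜ Ω) ⟨v, hv⟩) :=
  winning_set_attractor_decomposition_general Γ hΓ Ω hΩ.shiftInvariant p X hX
end

section
/- Let Γ = ((V,E),(V₁,V₂)) be a game graph with generalized Büchi objective ⋀_{ℓ=1}^k Büchi(T_ℓ) for target sets T₁,…,T_k ⊆ V. Suppose V' ⊆ V is 2-closed in Γ and for every ℓ ∈ {1,…,k} we have V' ⊆ Attr₁(Γ[V'], T_ℓ ∩ V'). Then every vertex of V' is winning for player 1 in the game on Γ with objective ⋀_{ℓ=1}^k Büchi(T_ℓ). -/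
open Classical

universe u

variable {V : Type u}

/-!
Player 1 pursues the targets one at a time, along a sequence in which each target recurs infinitely
often, and moves on as soon as the current target is reached. The attractor hypothesis makes every
pursuit succeed: it provides an ordinal rank on `V'` that player 1 can decrease, and player 2 cannot
avoid decreasing, at each vertex off the target. Since `V'` is closed for player 2, every new
pursuit again starts inside the attractor of its target. If `V'` meets a target in a finite set,
visiting this target infinitely often within `V'` means visiting one of its vertices infinitely
often.
-/

open Filter

theorem exists_seq_frequently_eq {α : Type*} {s : Set α} (hs : s.Countable) (hne : s.Nonempty) :
    ∃ f : ℕ → α, (∀ n, f n ∈ s) ∧ ∀ a ∈ s, ∃ᶠ n in atTop, f n = a := by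
  obtain ⟨g, rfl⟩ := hs.exists_eq_range hne
  refine ⟨fun n => g n.unpair.1, fun n => Set.mem_range_self _, ?_⟩
  rintro _ ⟨m, rfl⟩
  exact frequently_atTop.2 fun n => ⟨Nat.pair m n, Nat.right_le_pair m n, by
    simp only [Nat.unpair_pair]⟩

theorem nonempty_infOcc_inter {ω : ℕ → V} {s : Set V} (hs : s.Finite)
    (h : ∃ᶠ n in atTop, ω n ∈ s) : (InfOcc ω ∩ s).Nonempty := by
  have h' : ∃ᶠ n in atTop, ∃ v ∈ s, ω n = v := h.mono fun n hn => ⟨ω n, hn, rfl⟩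
  obtain ⟨v, hvs, hv⟩ := hs.frequently_exists.1 h'
  exact ⟨v, frequently_atTop.1 hv, hvs⟩

theorem exists_rank_lfp (f : Set V →o Set V) :
    ∃ r : V → Ordinal.{u}, ∀ v ∈ f.lfp, v ∈ f {w ∈ f.lfp | r w < r v} := by
  let stage : Ordinal.{u} → Set V := OrdinalApprox.lfpApprox f ⊥
  have stage_subset (o) : stage o ⊆ f.lfp :=
    OrdinalApprox.lfpApprox_le_of_mem_fixedPoints f f.isFixedPt_lfp bot_le o
  have exists_lt_of_mem_stage {v o} (hv : v ∈ stage o) : ∃ o' < o, v ∈ f (stage o') := by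
    rw [show stage o = _ from OrdinalApprox.lfpApprox.eq_1 f ⊥ o] at hv
    simpa only [bot_sup_eq, Set.iSup_eq_iUnion, Set.mem_iUnion, exists_prop] using hv
  let r (v : V) : Ordinal.{u} := sInf {o | v ∈ stage o}
  have r_le {v o} (hv : v ∈ stage o) : r v ≤ o := csInf_le' hv
  obtain ⟨o, ho⟩ : f.lfp ∈ Set.range stage := OrdinalApprox.lfp_mem_range_lfpApprox f
  have mem_stage_r {v} (hv : v ∈ f.lfp) : v ∈ stage (r v) :=
    csInf_mem (s := {o | v ∈ stage o}) ⟨o, ho.symm.subset hv⟩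
  refine ⟨r, fun v hv => ?_⟩
  obtain ⟨o', ho', hvo'⟩ := exists_lt_of_mem_stage (mem_stage_r hv)
  have hsub : stage o' ⊆ {w ∈ f.lfp | r w < r v} := fun w hw =>
    ⟨stage_subset o' hw, (r_le hw).trans_lt ho'⟩
  exact f.monotone hsub hvo'

theorem Player.opp_opp (p : Player) : p.opp.opp = p := by
  cases p <;> rfl

namespace GameGraph

variable {Γ : GameGraph V} {p : Player}

theorem verts_opp (Γ : GameGraph V) (p : Player) : Γ.verts p.opp = (Γ.verts p)ᶜ := by
  cases p
  · rfl
  · exact (compl_compl Γ.P1).symm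

theorem verts_sub (Γ : GameGraph V) (D : Set V) (p : Player) :
    (Γ.sub D).verts p = Subtype.val ⁻¹' Γ.verts p := by
  cases p <;> rfl

/-- The controllable predecessor: the vertices from which player `p` can ensure that the next
vertex of the play lies in `X`. -/
def cpre (Γ : GameGraph V) (p : Player) (X : Set V) : Set V :=
  {v | (v ∈ Γ.verts p → ∃ w, Γ.E v w ∧ w ∈ X) ∧ (v ∈ Γ.verts p.opp → ∀ w, Γ.E v w → w ∈ X)}

theorem cpre_mono (Γ : GameGraph V) (p : Player) : Monotone (Γ.cpre p) :=
  fun _ _ hXY _ hv => ⟨fun hp => (hv.1 hp).imp fun _ hw => ⟨hw.1, hXY hw.2⟩,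
    fun hp w hE => hXY (hv.2 hp w hE)⟩

theorem PClosed.subset_cpre {D : Set V} (hD : Γ.PClosed p.opp D) : D ⊆ Γ.cpre p D := by
  intro v hv
  have h := hD v hv
  rw [Player.opp_opp] at h
  exact h.symm

theorem cpre_sub_subset {D : Set V} (hD : Γ.PClosed p.opp D) {X : Set D} {v : D}
    (hv : v ∈ (Γ.sub D).cpre p X) : (v : V) ∈ Γ.cpre p (Subtype.val '' X) := by
  rw [cpre, verts_sub, verts_sub] at hv
  refine ⟨fun hp => ?_, fun hp w hE => ?_⟩
  · obtain ⟨w, hE, hw⟩ := hv.1 hp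
    exact ⟨w, hE, w, hw, rfl⟩
  · have hw : w ∈ D := (hD.subset_cpre v.2).2 hp w hE
    exact ⟨⟨w, hw⟩, hv.2 hp ⟨w, hw⟩ hE, rfl⟩

/-- The monotone operator whose least fixed point is the player-`p` attractor of `U`. -/
def attrStep (Γ : GameGraph V) (p : Player) (U : Set V) : Set V →o Set V where
  toFun X := U ∪ Γ.cpre p X
  monotone' _ _ hXY := Set.union_subset_union_right U (Γ.cpre_mono p hXY)

theorem attr_eq_lfp (Γ : GameGraph V) (p : Player) (U : Set V) :
    Γ.attr p U = (Γ.attrStep p U).lfp := by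
  apply Set.Subset.antisymm
  · intro v hv
    induction hv with
    | base hU => exact (Γ.attrStep p U).map_lfp.subset (.inl hU)
    | own hp hE _ ih =>
      refine (Γ.attrStep p U).map_lfp.subset (.inr ⟨fun _ => ⟨_, hE, ih⟩, fun hp' => ?_⟩)
      rw [verts_opp] at hp'
      exact absurd hp hp'
    | opp hp _ ih =>
      refine (Γ.attrStep p U).map_lfp.subset (.inr ⟨fun hp' => ?_, fun _ => ih⟩)
      rw [verts_opp] at hp
      exact absurd hp' hp
  · refine OrderHom.lfp_le _ (Set.union_subset (fun v hv => .base hv) fun v hv => ?_)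
    by_cases hp : v ∈ Γ.verts p
    · obtain ⟨w, hE, hw⟩ := hv.1 hp
      exact .own hp hE hw
    · have hp' : v ∈ Γ.verts p.opp := by rwa [verts_opp]
      exact .opp hp' (hv.2 hp')

theorem exists_rank_attr (Γ : GameGraph V) (p : Player) (U : Set V) :
    ∃ r : V → Ordinal.{u}, ∀ v ∈ Γ.attr p U, v ∉ U →
      v ∈ Γ.cpre p {w ∈ Γ.attr p U | r w < r v} := by
  rw [attr_eq_lfp]
  obtain ⟨r, hr⟩ := exists_rank_lfp _
  exact ⟨r, fun v hv hvU => (hr v hv).resolve_left hvU⟩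

theorem exists_rank_of_mem_attr_sub {D : Set V} (hD : Γ.PClosed p.opp D) {T : Set V}
    (hT : ∀ v : D, v ∈ (Γ.sub D).attr p (Subtype.val ⁻¹' T)) :
    ∃ r : V → Ordinal.{u}, ∀ v ∈ D, v ∉ T → v ∈ Γ.cpre p {w ∈ D | r w < r v} := by
  obtain ⟨r, hr⟩ := (Γ.sub D).exists_rank_attr p (Subtype.val ⁻¹' T)
  refine ⟨Function.extend Subtype.val r 0, fun v hv hvT => ?_⟩
  refine Γ.cpre_mono p ?_ (cpre_sub_subset hD (hr ⟨v, hv⟩ (hT _) hvT))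
  rintro _ ⟨w, ⟨-, hw⟩, rfl⟩
  have hext (a : D) : Function.extend Subtype.val r 0 (a : V) = r a :=
    Subtype.val_injective.extend_apply r 0 a
  exact ⟨w.2, by rwa [hext w, hext ⟨v, hv⟩]⟩

/-- The history before step `n` of the play `Γ.winPlay p σ τ v`, that is, the list of its first `n`
vertices. -/
noncomputable def winHist (Γ : GameGraph V) (p : Player) (σ τ : Strat V) (v : V) (n : ℕ) :
    List V :=
  (Γ.playAux (p.sel σ τ) (p.sel τ σ) v n).1

theorem winHist_succ (σ τ : Strat V) (v : V) (n : ℕ) :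
    Γ.winHist p σ τ v (n + 1) = Γ.winHist p σ τ v n ++ [Γ.winPlay p σ τ v n] :=
  rfl

theorem winPlay_succ_of_mem_verts {σ τ : Strat V} {v : V} {n : ℕ}
    (hn : Γ.winPlay p σ τ v n ∈ Γ.verts p) :
    Γ.winPlay p σ τ v (n + 1) = σ (Γ.winHist p σ τ v n) (Γ.winPlay p σ τ v n) := by
  cases p
  · exact if_pos hn
  · exact if_neg hn

theorem winPlay_succ_of_mem_verts_opp {σ τ : Strat V} {v : V} {n : ℕ}
    (hn : Γ.winPlay p σ τ v n ∈ Γ.verts p.opp) :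
    Γ.winPlay p σ τ v (n + 1) = τ (Γ.winHist p σ τ v n) (Γ.winPlay p σ τ v n) := by
  cases p
  · exact if_neg hn
  · exact if_pos hn

theorem exists_strategy_of_mem_cpre (hΓ : Γ.NoDead) (p : Player) (X : List V → V → Set V) :
    ∃ σ, Γ.ValidFor p σ ∧ ∀ τ, Γ.ValidFor p.opp τ → ∀ v n,
      Γ.winPlay p σ τ v n ∈ Γ.cpre p (X (Γ.winHist p σ τ v n) (Γ.winPlay p σ τ v n)) →
      Γ.winPlay p σ τ v (n + 1) ∈ X (Γ.winHist p σ τ v n) (Γ.winPlay p σ τ v n) := by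
  have hmove (h : List V) (v : V) :
      ∃ w, Γ.E v w ∧ (v ∈ Γ.verts p → v ∈ Γ.cpre p (X h v) → w ∈ X h v) := by
    by_cases hv : v ∈ Γ.verts p ∧ v ∈ Γ.cpre p (X h v)
    · exact (hv.2.1 hv.1).imp fun w hw => ⟨hw.1, fun _ _ => hw.2⟩
    · exact (hΓ v).imp fun w hE => ⟨hE, fun hp hX => absurd ⟨hp, hX⟩ hv⟩
  choose σ hσE hσX using hmove
  refine ⟨σ, fun h v _ => hσE h v, fun τ hτ v n hX => ?_⟩
  by_cases hp : Γ.winPlay p σ τ v n ∈ Γ.verts p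
  · rw [winPlay_succ_of_mem_verts hp]
    exact hσX _ _ hp hX
  · have hp' : Γ.winPlay p σ τ v n ∈ Γ.verts p.opp := by rwa [verts_opp]
    rw [winPlay_succ_of_mem_verts_opp hp']
    exact hX.2 hp' _ (hτ _ _ hp')

end GameGraph

/-- The number of targets of the sequence `S` that are reached in turn along the history `h`: the
target pursued after `h` is `S (reachedCount S h)`. -/
noncomputable def reachedCount (S : ℕ → Set V) (h : List V) : ℕ :=
  h.foldl (fun c v => if v ∈ S c then c + 1 else c) 0

theorem reachedCount_append_singleton (S : ℕ → Set V) (h : List V) (v : V) :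
    reachedCount S (h ++ [v]) =
      if v ∈ S (reachedCount S h) then reachedCount S h + 1 else reachedCount S h :=
  List.foldl_concat ..

theorem exists_ge_mem_of_rank_lt {β : Type*} [LT β] [WellFoundedLT β] {x : ℕ → V}
    {S : ℕ → Set V} {c : ℕ → ℕ} {r : ℕ → V → β}
    (hc₀ : c 0 = 0) (hc : ∀ n, c (n + 1) = if x n ∈ S (c n) then c n + 1 else c n)
    (hr : ∀ n, x n ∉ S (c n) → r (c n) (x (n + 1)) < r (c n) (x n)) (j : ℕ) :
    ∃ m ≥ j, x m ∈ S j := by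
  have c_le (n : ℕ) : c n ≤ n := by
    induction n with
    | zero => exact hc₀.le
    | succ n ih => grind
  have reaches (b : β) : ∀ n, r (c n) (x n) = b → ∃ m, c m = c n ∧ x m ∈ S (c n) := by
    induction b using WellFoundedLT.induction with
    | ind b ih =>
      rintro n rfl
      by_cases hn : x n ∈ S (c n)
      · exact ⟨n, rfl, hn⟩
      · have hcn : c (n + 1) = c n := by rw [hc, if_neg hn]
        have h := ih _ (hr n hn) (n + 1)
        rw [hcn] at h
        exact h rfl
  have surj : ∀ j, ∃ n, c n = j := by
    intro j
    induction j with
    | zero => exact ⟨0, hc₀⟩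
    | succ j ih =>
      obtain ⟨n, rfl⟩ := ih
      obtain ⟨m, hm, hmS⟩ := reaches _ n rfl
      exact ⟨m + 1, by rw [hc, hm, if_pos hmS]⟩
  obtain ⟨n, rfl⟩ := surj j
  obtain ⟨m, hm, hmS⟩ := reaches _ n rfl
  exact ⟨m, hm ▸ c_le m, hmS⟩

namespace GameGraph

variable {Γ : GameGraph V} {p : Player} {D : Set V}

theorem exists_strategy_visiting_seq (hΓ : Γ.NoDead) (hD : D ⊆ Γ.cpre p D) {β : Type*} [LT β]
    [WellFoundedLT β] {S : ℕ → Set V} {r : ℕ → V → β}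
    (hr : ∀ j, ∀ v ∈ D, v ∉ S j → v ∈ Γ.cpre p {w ∈ D | r j w < r j v}) :
    ∃ σ, Γ.ValidFor p σ ∧ ∀ τ, Γ.ValidFor p.opp τ → ∀ v ∈ D,
      (∀ n, Γ.winPlay p σ τ v n ∈ D) ∧ ∀ j, ∃ m ≥ j, Γ.winPlay p σ τ v m ∈ S j := by
  obtain ⟨σ, hσ, hforce⟩ := exists_strategy_of_mem_cpre hΓ p fun h v =>
    {w ∈ D | v ∉ S (reachedCount S h) → r (reachedCount S h) w < r (reachedCount S h) v}
  refine ⟨σ, hσ, fun τ hτ v hv => ?_⟩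
  set x := Γ.winPlay p σ τ v
  set c : ℕ → ℕ := fun n => reachedCount S (Γ.winHist p σ τ v n)
  have hstep (n) (hn : x n ∈ D) :
      x (n + 1) ∈ D ∧ (x n ∉ S (c n) → r (c n) (x (n + 1)) < r (c n) (x n)) := by
    refine hforce τ hτ v n ?_
    by_cases hS : x n ∈ S (c n)
    · refine Γ.cpre_mono p ?_ (hD hn)
      exact fun w hw => ⟨hw, fun h => absurd hS h⟩
    · refine Γ.cpre_mono p ?_ (hr (c n) (x n) hn hS)
      exact fun w hw => ⟨hw.1, fun _ => hw.2⟩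
  have stays (n : ℕ) : x n ∈ D := by
    induction n with
    | zero => exact hv
    | succ n ih => exact (hstep n ih).1
  have hc (n : ℕ) : c (n + 1) = if x n ∈ S (c n) then c n + 1 else c n := by
    simp only [c, x, winHist_succ, reachedCount_append_singleton]
  exact ⟨stays, exists_ge_mem_of_rank_lt rfl hc fun n => (hstep n (stays n)).2⟩

theorem forcesStayBuchi_of_mem_attr_sub (hΓ : Γ.NoDead) (hD : Γ.PClosed p.opp D) {ι : Sort*}
    [Countable ι] {T : ι → Set V}
    (hT : ∀ i, ∀ v : D, v ∈ (Γ.sub D).attr p (Subtype.val ⁻¹' T i)) :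
    ∀ v ∈ D, Γ.ForcesStayBuchi p D T v := by
  -- The extra target `Set.univ` makes the family nonempty.
  obtain ⟨S, hS, hfreq⟩ := exists_seq_frequently_eq
    ((Set.countable_range T).insert Set.univ) (Set.insert_nonempty _ _)
  have hSattr (j) (v : D) : v ∈ (Γ.sub D).attr p (Subtype.val ⁻¹' S j) := by
    rcases hS j with hj | ⟨i, hj⟩
    · exact .base (hj ▸ Set.mem_univ (v : V))
    · exact hj ▸ hT i v
  choose r hr using fun j => exists_rank_of_mem_attr_sub hD (hSattr j)
  obtain ⟨σ, hσ, hwin⟩ := exists_strategy_visiting_seq hΓ hD.subset_cpre hr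
  refine fun v hv => ⟨σ, hσ, fun τ hτ => ⟨(hwin τ hτ v hv).1, fun i n => ?_⟩⟩
  obtain ⟨j, hnj, hj⟩ := frequently_atTop.1 (hfreq (T i) (.inr ⟨i, rfl⟩)) n
  obtain ⟨m, hjm, hm⟩ := (hwin τ hτ v hv).2 j
  exact ⟨m, hnj.trans hjm, hj ▸ hm⟩

end GameGraph

theorem gen_buchi_soundness_general {Γ : GameGraph V} (hΓ : Γ.NoDead) {ι : Sort*} [Countable ι]
    {T : ι → Set V} {V' : Set V} (hcl : Γ.PClosed Player.two V') (hfin : ∀ i, (V' ∩ T i).Finite)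
    (hattr : ∀ i, ∀ v : V', v ∈ (Γ.sub V').attr Player.one {x : V' | (x : V) ∈ T i}) :
    ∀ v ∈ V', Γ.Wins Player.one (GenBuchiObj T) v := by
  intro v hv
  obtain ⟨σ, hσ, hforce⟩ := GameGraph.forcesStayBuchi_of_mem_attr_sub (p := .one) hΓ hcl hattr v hv
  refine ⟨σ, hσ, fun τ hτ i => ?_⟩
  obtain ⟨stays, visits⟩ := hforce τ hτ
  have hinf : (InfOcc (Γ.winPlay .one σ τ v) ∩ (V' ∩ T i)).Nonempty :=
    nonempty_infOcc_inter (hfin i) <| frequently_atTop.2 fun n =>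
      (visits i n).imp fun m hm => ⟨hm.1, stays m, hm.2⟩
  exact hinf.mono (Set.inter_subset_inter_right _ Set.inter_subset_right)

/-- If `V'` is 2-closed and for each target set `T ℓ` the whole of
`V'` lies in the player-1 attractor (inside the induced subgame `Γ[V']`) of
`T ℓ ∩ V'`, then every vertex of `V'` is winning for player 1 for the
generalized Büchi objective. -/
theorem gen_buchi_soundness {V : Type u} [Finite V]
    (Γ : GameGraph V) (hΓ : Γ.NoDead) {k : ℕ} (T : Fin k → Set V)
    (V' : Set V) (hcl : Γ.PClosed Player.two V')
    (hattr : ∀ ℓ : Fin k, ∀ v, ∀ hv : v ∈ V',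
      (⟨v, hv⟩ : ↥V') ∈ (Γ.sub V').attr Player.one {x : ↥V' | (x : V) ∈ T ℓ}) :
    ∀ v ∈ V', Γ.Wins Player.one (GenBuchiObj T) v := by
  exact gen_buchi_soundness_general hΓ hcl (fun _ => Set.toFinite _) fun ℓ v => hattr ℓ v v.2
end

section
/- Let Γ = ((V,E),(V₁,V₂)) be a game graph with hierarchical graph decomposition {G_i} and exception sets {Z_i}, and let T ⊆ V be a target set. For every i > 1: if the set S = V ∖ Attr₁(Γ_i, T ∪ Z_i) is nonempty but V ∖ Attr₁(Γ_{i−1}, T ∪ Z_{i−1}) is empty, then |Attr₂(Γ, S)| > 2^{i−1}. -/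
open Classical

universe u

variable {V : Type u}

/-!
A player-1 attractor never enters a 1-closed set disjoint from its target, and the complement of a
player-1 attractor is 1-closed. The set `S = V ∖ Attr₁(Γ_i, T ∪ Z_i)` avoids `Z_i`, so no edge of
a player-1 vertex of `S` is missing in `Γ_i`, and hence `S` is 1-closed in `Γ` too.

Suppose that `|Attr₂(Γ, S)| ≤ 2^j`. A player-1 vertex of `S` has all its successors in `S`, hence
out-degree at most `2^j`. If a player-2 vertex `v` has a successor `w ∈ S`, then `v` and all
sources listed before it at `w` are player-2 predecessors of `w`, hence in `Attr₂(Γ, S)`; so `v` is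
among the first `2^j` sources and the edge survives in `Γ_j`. Thus `S` is 1-closed in `Γ_j` and
avoids `T ∪ Z_j`, so it avoids `Attr₁(Γ_j, T ∪ Z_j)`.
-/

namespace GameGraph

variable {Γ : GameGraph V} {p : Player} {U W : Set V}

theorem subset_attr : U ⊆ Γ.attr p U := fun _ => Attr.base

theorem own_predecessors_subset_attr {w : V} (hw : w ∈ U) :
    {u | Γ.E u w ∧ u ∈ Γ.verts p} ⊆ Γ.attr p U :=
  fun _ hu => .own hu.2 hu.1 (subset_attr hw)

theorem pClosed_compl_attr_s8 : Γ.PClosed p (Γ.attr p U)ᶜ := by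
  refine fun v hv => ⟨fun hp w he hw => hv (.own hp he hw), fun hp => ?_⟩
  by_contra! hall
  exact hv (.opp hp fun w he => not_not.1 (hall w he))

theorem PClosed.disjoint_attr (hU : Γ.PClosed p U) (hUW : Disjoint U W) :
    Disjoint U (Γ.attr p W) := by
  refine Set.disjoint_right.2 fun v (hv : Γ.Attr p W v) => ?_
  induction hv with
  | base hW => exact Set.disjoint_right.1 hUW hW
  | own hp he _ ih => exact fun hvU => ih ((hU _ hvU).1 hp _ he)
  | opp hp _ ih =>
    intro hvU
    obtain ⟨w, he, hw⟩ := (hU _ hvU).2 hp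
    exact ih w he hw

end GameGraph

namespace HierDecomp

variable {Γ : GameGraph V} {S : Set V} {j : ℕ}

theorem image_idx_predecessors (H : HierDecomp Γ) (w : V) :
    H.idx w '' {u | Γ.E u w} = Set.Iio {u | Γ.E u w}.ncard := by
  have hinj : Set.InjOn (H.idx w) {u | Γ.E u w} := fun u hu u' hu' => H.idx_inj w u u' hu hu'
  refine Set.eq_of_subset_of_ncard_le ?_ ?_ (Set.finite_Iio _)
  · exact Set.image_subset_iff.2 fun u hu => H.idx_lt w u hu
  · rw [hinj.ncard_image, Set.ncard_Iio_nat]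

theorem idx_lt_encard_player_two_predecessors (H : HierDecomp Γ) {v w : V}
    (he : Γ.E v w) (hv : v ∉ Γ.P1) :
    (H.idx w v : ℕ∞) < {u | Γ.E u w ∧ u ∉ Γ.P1}.encard := by
  have hsub : Set.Iic (H.idx w v) ⊆ H.idx w '' {u | Γ.E u w ∧ u ∉ Γ.P1} := by
    intro n hn
    have hpos : n ∈ H.idx w '' {u | Γ.E u w} := by
      rw [H.image_idx_predecessors]
      exact lt_of_le_of_lt hn (H.idx_lt w v he)
    obtain ⟨u, hu, rfl⟩ := hpos
    exact ⟨u, ⟨hu, fun hu1 => (H.p2_first w v u he hu hv hu1).not_ge hn⟩, rfl⟩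
  calc (H.idx w v : ℕ∞) < (H.idx w v + 1 : ℕ) := by exact_mod_cast Nat.lt_succ_self _
    _ = (Set.Iic (H.idx w v)).encard := by
      rw [← (Set.finite_Iic _).cast_ncard_eq, Set.ncard_Iic_nat]
    _ ≤ (H.idx w '' {u | Γ.E u w ∧ u ∉ Γ.P1}).encard := Set.encard_le_encard hsub
    _ ≤ {u | Γ.E u w ∧ u ∉ Γ.P1}.encard := Set.encard_image_le _ _

theorem pClosed_of_pClosed_graph {H : HierDecomp Γ} (hS : (H.graph j).PClosed .one S)
    (hZ : Disjoint S (H.Z j)) : Γ.PClosed .one S := by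
  refine fun v hv => ⟨fun hv1 w he => ?_, fun hv2 => ?_⟩
  · have hdeg : Γ.outDeg v ≤ 2 ^ j :=
      not_lt.1 fun hlt => Set.disjoint_left.1 hZ hv (Or.inr ⟨hv1, hlt⟩)
    exact (hS v hv).1 hv1 w ⟨he, Or.inl hdeg⟩
  · obtain ⟨w, he, hw⟩ := (hS v hv).2 hv2
    exact ⟨w, he.1, hw⟩

theorem pClosed_graph_of_encard_attr_le (H : HierDecomp Γ) (hS : Γ.PClosed .one S)
    (hcard : (Γ.attr .two S).encard ≤ 2 ^ j) : (H.graph j).PClosed .one S := by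
  refine fun v hv => ⟨fun hv1 w he => (hS v hv).1 hv1 w he.1, fun hv2 => ?_⟩
  obtain ⟨w, he, hw⟩ := (hS v hv).2 hv2
  have hidx : (H.idx w v : ℕ∞) < 2 ^ j :=
    calc (H.idx w v : ℕ∞) < {u | Γ.E u w ∧ u ∉ Γ.P1}.encard :=
          H.idx_lt_encard_player_two_predecessors he hv2
      _ ≤ (Γ.attr .two S).encard :=
          Set.encard_le_encard (GameGraph.own_predecessors_subset_attr (p := .two) hw)
      _ ≤ 2 ^ j := hcard
  exact ⟨w, ⟨he, Or.inr (by exact_mod_cast hidx)⟩, hw⟩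

theorem disjoint_Z_of_encard_attr_le (H : HierDecomp Γ) (hS : Γ.PClosed .one S)
    (hcard : (Γ.attr .two S).encard ≤ 2 ^ j) : Disjoint S (H.Z j) := by
  refine Set.disjoint_left.2 fun v hv => ?_
  rintro (⟨hv2, hdead⟩ | ⟨hv1, hdeg⟩)
  · obtain ⟨w, he, -⟩ := (H.pClosed_graph_of_encard_attr_le hS hcard v hv).2 hv2
    exact hdead ⟨w, he⟩
  · have hsucc : {w | Γ.E v w} ⊆ Γ.attr .two S :=
      fun w he => GameGraph.subset_attr ((hS v hv).1 hv1 w he)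
    have hle : {w | Γ.E v w}.encard ≤ (2 ^ j : ℕ) := by
      exact_mod_cast (Set.encard_le_encard hsucc).trans hcard
    exact (Set.encard_le_coe_iff_finite_ncard_le.1 hle).2.not_gt hdeg

end HierDecomp

/-- At a vertex of infinite out-degree `outDeg` is `0`, so `graph` keeps all its edges and `Z` omits
it. -/
theorem hier_decomp_dominion_size_general (Γ : GameGraph V) (H : HierDecomp Γ)
    (T : Set V) (i j : ℕ)
    (hattr : ¬ (H.graph j).attr .one (T ∪ H.Z j) ⊆ (H.graph i).attr .one (T ∪ H.Z i)) :
    2 ^ j < (Γ.attr .two ((H.graph i).attr .one (T ∪ H.Z i))ᶜ).encard := by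
  contrapose! hattr with hcard
  have hdisj : Disjoint ((H.graph i).attr .one (T ∪ H.Z i))ᶜ (T ∪ H.Z i) :=
    Set.disjoint_compl_left_iff_subset.2 GameGraph.subset_attr
  obtain ⟨hT, hZ⟩ := Set.disjoint_union_right.1 hdisj
  have hclosed : Γ.PClosed .one ((H.graph i).attr .one (T ∪ H.Z i))ᶜ :=
    HierDecomp.pClosed_of_pClosed_graph GameGraph.pClosed_compl_attr_s8 hZ
  exact Set.disjoint_compl_left_iff_subset.1 <|
    (H.pClosed_graph_of_encard_attr_le hclosed hcard).disjoint_attr <|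
      Set.disjoint_union_right.2 ⟨hT, H.disjoint_Z_of_encard_attr_le hclosed hcard⟩

/-- If `S = V ∖ Attr₁(Γ_i, T ∪ Z_i)` is nonempty but
`V ∖ Attr₁(Γ_{i−1}, T ∪ Z_{i−1})` is empty (for `i > 1`), then
`|Attr₂(Γ, S)| > 2^{i−1}`. -/
theorem hier_decomp_dominion_size {V : Type u} [Finite V]
    (Γ : GameGraph V) (hΓ : Γ.NoDead) (H : HierDecomp Γ)
    (T : Set V) (i : ℕ) (hi : 1 < i)
    (hS : (((H.graph i).attr Player.one (T ∪ H.Z i))ᶜ).Nonempty)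
    (hprev : ((H.graph (i - 1)).attr Player.one (T ∪ H.Z (i - 1)))ᶜ
        = (∅ : Set V)) :
    2 ^ (i - 1) <
      (Γ.attr Player.two (((H.graph i).attr Player.one (T ∪ H.Z i))ᶜ)).ncard := by
  have hlt := hier_decomp_dominion_size_general Γ H T i (i - 1) fun hsub =>
    hS.ne_empty (Set.subset_empty_iff.1 (hprev ▸ Set.compl_subset_compl.2 hsub))
  rw [← (Set.toFinite _).cast_ncard_eq] at hlt
  exact_mod_cast hlt
end
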